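/- arXiv:2102.02405 — 2 statements merged into one kernel-verified Lean document; each statement's English description precedes it below -/
import Mathlib

section
/- For every integer n ≥ 2, the action of K on the set of complete flags in ℂ^n has exactly n(n+1)/2 (that is, binomial(n+1,2)) orbits: the quotient of the set of complete flags in ℂ^n by the K-action is finite of cardinality n(n+1)/2. -/
open Module Submodule

noncomputable section

/-- `stdVec n m` is the `m`-th standard basis vector of `ℂ^n` (1-indexed); `0` out of range. -/
def stdVec (n m : ℕ) : Fin n → ℂ :=
  if h : 1 ≤ m ∧ m ≤ n then Pi.single (⟨m - 1, by omega⟩ : Fin n) 1 else 0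

/-- `stdSub n k` is the subspace `U_k = span(e_1, …, e_k)` of `ℂ^n`. -/
def stdSub (n k : ℕ) : Submodule ℂ (Fin n → ℂ) :=
  span ℂ (stdVec n '' Set.Icc 1 k)

/-- The action of an invertible linear map of `ℂ^n` on a chain of subspaces. -/
def actFlag (n : ℕ) (g : (Fin n → ℂ) ≃ₗ[ℂ] (Fin n → ℂ))
    (V : ℕ → Submodule ℂ (Fin n → ℂ)) (k : ℕ) : Submodule ℂ (Fin n → ℂ) :=
  Submodule.map g.toLinearMap (V k)

/-- The orbit of the chain `V` under a set `B` of invertible linear maps. -/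
def orbitOf (n : ℕ) (B : Set ((Fin n → ℂ) ≃ₗ[ℂ] (Fin n → ℂ)))
    (V : ℕ → Submodule ℂ (Fin n → ℂ)) : Set (ℕ → Submodule ℂ (Fin n → ℂ)) :=
  {V' | ∃ b ∈ B, actFlag n b V = V'}

/-- A complete flag in `ℂ^n`: `V k` is the `k`-dimensional member for `0 ≤ k ≤ n`;
values above `n` are pinned so that two flags are equal iff they agree in degrees `≤ n`. -/
def IsCompleteFlag (n : ℕ) (V : ℕ → Submodule ℂ (Fin n → ℂ)) : Prop :=
  (∀ k, k ≤ n → finrank ℂ ↥(V k) = k) ∧ (∀ k, V k ≤ V (k + 1)) ∧ (∀ k, n ≤ k → V k = V n)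

/-- The complete flag `(v 1 ⊂ v 2 ⊂ ⋯ ⊂ v n)` spanned by the vectors `v 1, …, v n`. -/
def flagOf (n : ℕ) (v : ℕ → Fin n → ℂ) (k : ℕ) : Submodule ℂ (Fin n → ℂ) :=
  span ℂ (v '' Set.Icc 1 (min k n))

/-- `K = {g ∈ GL(n,ℂ) : g e_n = e_n, g U_{n-1} = U_{n-1}}`, a copy of `GL(n-1,ℂ)`. -/
def Ksub (n : ℕ) : Set ((Fin n → ℂ) ≃ₗ[ℂ] (Fin n → ℂ)) :=
  {g | g (stdVec n n) = stdVec n n ∧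
       Submodule.map g.toLinearMap (stdSub n (n - 1)) = stdSub n (n - 1)}

/-- `V'` lies in the `K`-orbit of `V`. -/
def InKOrbit (n : ℕ) (V V' : ℕ → Submodule ℂ (Fin n → ℂ)) : Prop :=
  ∃ g ∈ Ksub n, actFlag n g V = V'

/-- Vectors of the representative flags: for `i = j` this gives the flag `F_i`
`(e_1 ⊂ ⋯ ⊂ e_{i-1} ⊂ e_n ⊂ e_i ⊂ ⋯ ⊂ e_{n-1})` (`e_n` in position `i`), and for
`i < j` the flag `F_{i,j}`
`(e_1 ⊂ ⋯ ⊂ e_{i-1} ⊂ e_i + e_n ⊂ e_{i+1} ⊂ ⋯ ⊂ e_{j-1} ⊂ e_n ⊂ e_j ⊂ ⋯ ⊂ e_{n-1})`. -/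
def repVec (n i j m : ℕ) : Fin n → ℂ :=
  if m < i then stdVec n m
  else if m = i then (if i < j then stdVec n i else 0) + stdVec n n
  else if m < j then stdVec n m
  else if m = j then stdVec n n
  else stdVec n (m - 1)

/-- `repFlag n i i = F_i` and `repFlag n i j = F_{i,j}` for `i < j`. -/
def repFlag (n i j : ℕ) : ℕ → Submodule ℂ (Fin n → ℂ) := flagOf n (repVec n i j)

/-- The set of `K`-orbits of complete flags in `ℂ^n`. -/
def FlagOrbitSpace (n : ℕ) : Type :=
  Quot fun F F' : {V : ℕ → Submodule ℂ (Fin n → ℂ) // IsCompleteFlag n V} =>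
    InKOrbit n F.1 F'.1

/-!
A flag `V` is positioned relative to the vector `e` and the hyperplane `H = ker φ`, where `φ e ≠ 0`,
by two steps: the one at which `V` leaves `H`, and the one at which it picks up `e`. The first
never comes after the second, and both are invariant under the stabilizer of `(e, H)`.
Conversely, a flag in position `(i, j)` is spanned by a basis whose `j`-th vector is `e`, on which
`φ` takes the value `φ e` at `i` and `j` and vanishes elsewhere: scale a vector of `V (i + 1)`
outside `H`, and use it to correct the later ones. The linear map matching two such bases
fixes `e` and preserves `φ`, so the orbits correspond to the pairs `i ≤ j`.
-/

open scoped Pointwise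

theorem exists_lt_forall_iff_lt {p : ℕ → Prop} {n : ℕ} (hp : Monotone p) (h₀ : ¬p 0) (hn : p n) :
    ∃ i < n, ∀ k, p k ↔ i < k := by
  obtain ⟨i, hi, hi'⟩ := Nat.exists_not_and_succ_of_not_zero_of_exists h₀ ⟨n, hn⟩
  have key (k) : p k ↔ i < k :=
    ⟨fun hk => not_le.mp fun hki => hi (hp hki hk), fun hik => hp hik hi'⟩
  exact ⟨i, (key n).mp hn, key⟩

section InitialSpan

/-- The complete flags of a finite-dimensional space `E`, as an invariant subset of the sequences of
subspaces: the `k`-th term has dimension `k`, and the sequence is constant from `finrank K E` on. -/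
def fullFlags (K E : Type*) [DivisionRing K] [AddCommGroup E] [Module K E] :
    SubMulAction (E ≃ₗ[K] E) (ℕ → Submodule K E) where
  carrier := {V | Monotone V ∧ ∀ k, finrank K (V k) = min k (finrank K E)}
  smul_mem' g V hV := ⟨fun _ _ hkl => Submodule.map_mono (hV.1 hkl),
    fun k => (LinearEquiv.finrank_map_eq g (V k)).trans (hV.2 k)⟩

variable {K E : Type*} [DivisionRing K] [AddCommGroup E] [Module K E] {n : ℕ}

variable (K) in
/-- The sequence of spans of the first `k` vectors of a family. For a basis this is the flag
`Module.Basis.flag`, extended to all natural indices. -/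
def initialSpan (w : Fin n → E) (k : ℕ) : Submodule K E :=
  span K (w '' {m | (m : ℕ) < k})

theorem initialSpan_le_iff {w : Fin n → E} {k : ℕ} {p : Submodule K E} :
    initialSpan K w k ≤ p ↔ ∀ m : Fin n, (m : ℕ) < k → w m ∈ p :=
  span_le.trans Set.forall_mem_image

theorem basis_mem_initialSpan_iff (b : Basis (Fin n) K E) {m : Fin n} {k : ℕ} :
    b m ∈ initialSpan K b k ↔ (m : ℕ) < k :=
  b.self_mem_span_image

theorem smul_initialSpan (g : E ≃ₗ[K] E) (w : Fin n → E) :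
    g • initialSpan K w = initialSpan K (fun m => g (w m)) := by
  funext k
  change (span K _).map g.toLinearMap = _
  rw [Submodule.map_span, ← Set.image_comp]
  rfl

theorem initialSpan_eq_ker_coord_last (b : Basis (Fin (n + 1)) K E) :
    initialSpan K b n = LinearMap.ker (b.coord (Fin.last n)) := by
  ext x
  rw [initialSpan, Basis.mem_span_image, LinearMap.mem_ker, Basis.coord_apply]
  simp [Set.subset_def, Fin.forall_fin_succ']

theorem initialSpan_mem_fullFlags (b : Basis (Fin n) K E) : initialSpan K b ∈ fullFlags K E := by
  refine ⟨fun k l hkl => span_mono (Set.image_mono fun m hm => lt_of_lt_of_le hm hkl), fun k => ?_⟩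
  have hli : LinearIndepOn K b {m | (m : ℕ) < k} := b.linearIndependent.linearIndepOn _
  rw [initialSpan, Set.image_eq_range, finrank_span_eq_card hli, finrank_eq_card_basis b,
    Fintype.card_fin, min_comm, Fintype.card_subtype]
  exact Fin.card_filter_val_lt

theorem linearIndependent_of_mem_of_notMem {V : ℕ → Submodule K E} (hV : Monotone V)
    {w : Fin n → E} (hmem : ∀ m : Fin n, w m ∈ V (m + 1)) (hnot : ∀ m : Fin n, w m ∉ V m) :
    LinearIndependent K w := by
  induction n with
  | zero => exact linearIndependent_empty_type
  | succ n ih =>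
    refine linearIndependent_finSucc'.mpr
      ⟨ih (fun m => hmem m.castSucc) (fun m => hnot m.castSucc), fun h => hnot (Fin.last n) ?_⟩
    refine span_le.mpr ?_ h
    rintro _ ⟨m, rfl⟩
    exact hV m.isLt (hmem m.castSucc)

variable [FiniteDimensional K E]

theorem exists_basis_initialSpan_eq {V : ℕ → Submodule K E} (hV : V ∈ fullFlags K E)
    {w : Fin (finrank K E) → E} (hmem : ∀ m : Fin (finrank K E), w m ∈ V (m + 1))
    (hnot : ∀ m : Fin (finrank K E), w m ∉ V m) :
    ∃ b : Basis (Fin (finrank K E)) K E, ⇑b = w ∧ initialSpan K b = V := by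
  have hli := linearIndependent_of_mem_of_notMem hV.1 hmem hnot
  let b := basisOfLinearIndependentOfCardEqFinrank' w hli (Fintype.card_fin _)
  have hb : ⇑b = w := coe_basisOfLinearIndependentOfCardEqFinrank' ..
  refine ⟨b, hb, funext fun k => eq_of_le_of_finrank_eq ?_ ?_⟩
  · exact initialSpan_le_iff.mpr fun m hm => hb ▸ hV.1 hm (hmem m)
  · rw [(initialSpan_mem_fullFlags b).2 k, hV.2 k]

theorem exists_basis_apply_eq {e : E} (he : e ≠ 0) (j : Fin (finrank K E)) :
    ∃ b : Basis (Fin (finrank K E)) K E, b j = e := by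
  have hli : LinearIndepOn K id {e} := LinearIndepOn.singleton he
  let c := Basis.extend hli
  let i : hli.extend (Set.subset_univ _) := ⟨e, hli.subset_extend _ rfl⟩
  let σ := c.indexEquiv (finBasis K E)
  exact ⟨c.reindex (σ.trans (Equiv.swap (σ i) j)), by simp [c, i]⟩

end InitialSpan

section RelativePosition

variable {K E : Type*} [DivisionRing K] [AddCommGroup E] [Module K E] {n : ℕ}
  {V : ℕ → Submodule K E} {φ : E →ₗ[K] K} {e : E}

/-- The group of linear automorphisms of `E` that fix the vector `e` and preserve the
subspace `H`. -/
def pairStabilizer (e : E) (H : Submodule K E) : Subgroup (E ≃ₗ[K] E) :=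
  MulAction.stabilizer _ e ⊓ MulAction.stabilizer _ H

/-- The position `(i, j)` of a sequence of subspaces relative to a vector `e` and a subspace `H`:
`V (i + 1)` is the first term not contained in `H`, and `V (j + 1)` the first one containing `e`.
Thus `i` and `j` are the indices, counted from `0`, of the steps of `V` where this happens. -/
structure HasPosition (V : ℕ → Submodule K E) (e : E) (H : Submodule K E) (i j : ℕ) : Prop where
  le_iff : ∀ k, V k ≤ H ↔ k ≤ i
  mem_iff : ∀ k, e ∈ V k ↔ j < k

/-- A family of vectors adapted to a linear form `φ`, a vector `e` and a position `(i, j)`. When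
`φ e ≠ 0` and `i ≤ j`, the initial spans of an adapted basis form a flag in position `(i, j)`
relative to `e` and `ker φ`. -/
structure IsAdapted (φ : E →ₗ[K] K) (e : E) (i j : Fin n) (w : Fin n → E) : Prop where
  apply_eq : w j = e
  map_apply : ∀ m, φ (w m) = if m = i ∨ m = j then φ e else 0

theorem HasPosition.unique {H : Submodule K E} {i j i' j' : ℕ} (h : HasPosition V e H i j)
    (h' : HasPosition V e H i' j') : i = i' ∧ j = j' :=
  ⟨eq_of_forall_le_iff fun k => (h.le_iff k).symm.trans (h'.le_iff k),
    eq_of_forall_gt_iff fun k => (h.mem_iff k).symm.trans (h'.mem_iff k)⟩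

theorem HasPosition.smul {H : Submodule K E} {i j : ℕ} (h : HasPosition V e H i j)
    {g : E ≃ₗ[K] E} (hg : g ∈ pairStabilizer e H) : HasPosition (g • V) e H i j where
  le_iff k := by
    rw [← h.le_iff, Pi.smul_apply]
    nth_rw 1 [← show g • H = H from hg.2]
    exact Submodule.map_le_map_iff_of_injective g.injective _ _
  mem_iff k := by
    rw [← h.mem_iff, Pi.smul_apply]
    nth_rw 1 [← show g • e = e from hg.1]
    exact g.injective.mem_set_image

theorem exists_hasPosition [FiniteDimensional K E] (hV : V ∈ fullFlags K E) {H : Submodule K E}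
    (he : e ∉ H) : ∃ i j : Fin (finrank K E), i ≤ j ∧ HasPosition V e H i j := by
  have hbot : V 0 = ⊥ := Submodule.finrank_eq_zero.mp ((hV.2 0).trans (Nat.zero_min _))
  have htop : V (finrank K E) = ⊤ := eq_top_of_finrank_eq ((hV.2 _).trans (min_self _))
  obtain ⟨i, hin, hi⟩ : ∃ i < finrank K E, ∀ k, ¬V k ≤ H ↔ i < k :=
    exists_lt_forall_iff_lt (fun k l hkl hk hl => hk ((hV.1 hkl).trans hl)) (by simp [hbot])
      fun h => he (h (htop ▸ mem_top))
  obtain ⟨j, hjn, hj⟩ : ∃ j < finrank K E, ∀ k, e ∈ V k ↔ j < k :=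
    exists_lt_forall_iff_lt (fun k l hkl hk => hV.1 hkl hk)
      (fun h => he (hbot.le.trans bot_le h)) (htop ▸ mem_top)
  have hij : i ≤ j :=
    Nat.lt_succ_iff.mp ((hi (j + 1)).mp fun h => he (h ((hj _).mpr j.lt_succ_self)))
  exact ⟨⟨i, hin⟩, ⟨j, hjn⟩, hij, fun k => not_iff_not.mp ((hi k).trans not_le.symm), hj⟩

theorem exists_mem_notMem_apply_eq {A B : Submodule K E} (hA : A ≤ LinearMap.ker φ)
    (hB : ¬B ≤ LinearMap.ker φ) {c : K} (hc : c ≠ 0) : ∃ x ∈ B, x ∉ A ∧ φ x = c := by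
  obtain ⟨y, hyB, hy : φ y ≠ 0⟩ := SetLike.not_le_iff_exists.mp hB
  have hφ : φ ((c * (φ y)⁻¹) • y) = c := by simp [hy]
  exact ⟨_, B.smul_mem _ hyB, fun h => hc (hφ.symm.trans (hA h)), hφ⟩

theorem exists_mem_notMem_apply_eq_zero {A B : Submodule K E} (hAB : A < B)
    (h : A ≤ LinearMap.ker φ → B ≤ LinearMap.ker φ) : ∃ x ∈ B, x ∉ A ∧ φ x = 0 := by
  obtain ⟨x, hxB, hxA⟩ := SetLike.exists_of_lt hAB
  by_cases hA : A ≤ LinearMap.ker φ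
  · exact ⟨x, hxB, hxA, h hA hxB⟩
  · obtain ⟨y, hyA, hy : φ y ≠ 0⟩ := SetLike.not_le_iff_exists.mp hA
    have hcA := A.smul_mem (φ x * (φ y)⁻¹) hyA
    exact ⟨x - (φ x * (φ y)⁻¹) • y, B.sub_mem hxB (hAB.le hcA),
      fun h => hxA ((A.sub_mem_iff_left hcA).mp h), by simp [hy]⟩

theorem IsAdapted.hasPosition {b : Basis (Fin n) K E} {i j : Fin n} (hb : IsAdapted φ e i j b)
    (he : φ e ≠ 0) (hij : i ≤ j) :
    HasPosition (initialSpan K b) e (LinearMap.ker φ) i j where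
  le_iff k := by
    simp only [initialSpan_le_iff, LinearMap.mem_ker, hb.map_apply, ite_eq_right_iff, he, imp_false]
    grind
  mem_iff k := by rw [← hb.apply_eq, basis_mem_initialSpan_iff]

theorem IsAdapted.exists_smul_eq {b b' : Basis (Fin n) K E} {i j : Fin n}
    (hb : IsAdapted φ e i j b) (hb' : IsAdapted φ e i j b') :
    ∃ g ∈ pairStabilizer e (LinearMap.ker φ), g • initialSpan K b = initialSpan K b' := by
  let g := b.equiv b' (Equiv.refl _)
  have hg (m) : g (b m) = b' m := by simp [g]
  have hφ : φ ∘ₗ g.toLinearMap = φ :=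
    b.ext fun m => by simp [hg, hb.map_apply, hb'.map_apply]
  refine ⟨g, ⟨?_, ?_⟩, by simp only [smul_initialSpan, hg]⟩
  · change g e = e
    rw [← hb.apply_eq, hg, hb'.apply_eq, hb.apply_eq]
  · change (LinearMap.ker φ).map g.toLinearMap = LinearMap.ker φ
    nth_rw 1 [← hφ]
    rw [LinearMap.ker_comp, map_comap_eq_of_surjective g.surjective]

variable [FiniteDimensional K E]

theorem HasPosition.exists_isAdapted (hV : V ∈ fullFlags K E) (he : φ e ≠ 0)
    {i j : Fin (finrank K E)} (h : HasPosition V e (LinearMap.ker φ) i j) :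
    ∃ b : Basis (Fin (finrank K E)) K E, IsAdapted φ e i j b ∧ initialSpan K b = V := by
  have hlt (m : Fin (finrank K E)) : V m < V (m + 1) := by
    refine lt_of_le_of_finrank_lt_finrank (hV.1 m.val.le_succ) ?_
    rw [hV.2, hV.2]
    omega
  have hw (m : Fin (finrank K E)) : ∃ x ∈ V (m + 1), x ∉ V m ∧
      φ x = (if m = i ∨ m = j then φ e else 0) ∧ (m = j → x = e) := by
    by_cases hj : m = j
    · exact ⟨e, (h.mem_iff _).mpr (by grind), (h.mem_iff _).not.mpr (by grind), by simp [hj],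
        fun _ => rfl⟩
    by_cases hi : m = i
    · simpa [hi, show i ≠ j from hi ▸ hj] using exists_mem_notMem_apply_eq
        ((h.le_iff m).mpr (by grind))
        ((h.le_iff (m + 1)).not.mpr (by grind)) he
    · simpa [hi, hj] using exists_mem_notMem_apply_eq_zero (φ := φ) (hlt m)
        (by rw [h.le_iff, h.le_iff]; grind)
  choose w hmem hnot hφ hwe using hw
  obtain ⟨b, hb, hbV⟩ := exists_basis_initialSpan_eq hV hmem hnot
  exact ⟨b, hb ▸ ⟨hwe j rfl, hφ⟩, hbV⟩

theorem exists_basis_isAdapted (he : φ e ≠ 0) (i j : Fin (finrank K E)) :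
    ∃ b : Basis (Fin (finrank K E)) K E, IsAdapted φ e i j b := by
  obtain ⟨c, hc⟩ := exists_basis_apply_eq (K := K) (e := e) (by rintro rfl; simp at he) j
  -- Multiples of `e = c j` are added to the other vectors to give `φ` the prescribed values.
  let t (m : Fin (finrank K E)) : K := ((if m = i ∨ m = j then φ e else 0) - φ (c m)) * (φ e)⁻¹
  have htj : t j = 0 := by simp [t, hc]
  have hli : LinearIndependent K (⇑c + (t · • c j)) :=
    (linearIndependent_add_smul_iff htj).mpr c.linearIndependent
  refine ⟨basisOfLinearIndependentOfCardEqFinrank' _ hli (Fintype.card_fin _), ?_, fun m => ?_⟩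
  · simp [htj, hc]
  · simp [t, hc, he]

theorem exists_pairStabilizer_smul_eq {V' : ℕ → Submodule K E} (hV : V ∈ fullFlags K E)
    (hV' : V' ∈ fullFlags K E) (he : φ e ≠ 0) {i j : Fin (finrank K E)}
    (h : HasPosition V e (LinearMap.ker φ) i j) (h' : HasPosition V' e (LinearMap.ker φ) i j) :
    ∃ g ∈ pairStabilizer e (LinearMap.ker φ), g • V = V' := by
  obtain ⟨b, hb, rfl⟩ := h.exists_isAdapted hV he
  obtain ⟨b', hb', rfl⟩ := h'.exists_isAdapted hV' he
  exact hb.exists_smul_eq hb'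

theorem nonempty_sym2_equiv_orbits (he : φ e ≠ 0) :
    Nonempty (Sym2 (Fin (finrank K E)) ≃
      MulAction.orbitRel.Quotient (pairStabilizer e (LinearMap.ker φ)) (fullFlags K E)) := by
  have hF (p : {p : Fin (finrank K E) × Fin (finrank K E) // p.1 ≤ p.2}) :
      ∃ F : fullFlags K E, HasPosition F.1 e (LinearMap.ker φ) p.1.1 p.1.2 := by
    obtain ⟨b, hb⟩ := exists_basis_isAdapted he p.1.1 p.1.2
    exact ⟨⟨_, initialSpan_mem_fullFlags b⟩, hb.hasPosition he p.2⟩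
  choose F hF using hF
  refine ⟨Sym2.sortEquiv.trans (Equiv.ofBijective (fun p => Quotient.mk _ (F p)) ⟨?_, ?_⟩)⟩
  · intro p q hpq
    obtain ⟨g, hg⟩ := Quotient.exact hpq
    have hpos := (hF q).smul g.2
    rw [show g.1 • (F q).1 = (F p).1 from congrArg Subtype.val hg] at hpos
    obtain ⟨hi, hj⟩ := (hF p).unique hpos
    exact Subtype.ext (Prod.ext (Fin.ext hi) (Fin.ext hj))
  · refine Quotient.ind fun V => ?_
    obtain ⟨i, j, hij, hV⟩ := exists_hasPosition V.2 (show e ∉ LinearMap.ker φ from he)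
    obtain ⟨g, hg, hgV⟩ := exists_pairStabilizer_smul_eq V.2 (F ⟨(i, j), hij⟩).2 he hV (hF _)
    exact ⟨⟨(i, j), hij⟩, Quotient.sound ⟨⟨g, hg⟩, Subtype.ext hgV⟩⟩

end RelativePosition

theorem stmt_0_general {K E : Type*} [DivisionRing K] [AddCommGroup E] [Module K E]
    [FiniteDimensional K E] {φ : E →ₗ[K] K} {e : E} (he : φ e ≠ 0) :
    Finite (MulAction.orbitRel.Quotient
      (pairStabilizer e (LinearMap.ker φ)) (fullFlags K E)) ∧
    Nat.card (MulAction.orbitRel.Quotient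
      (pairStabilizer e (LinearMap.ker φ)) (fullFlags K E)) =
        finrank K E * (finrank K E + 1) / 2 := by
  obtain ⟨f⟩ := nonempty_sym2_equiv_orbits he
  refine ⟨.of_equiv _ f, ?_⟩
  rw [← Nat.card_congr f, Nat.card_eq_fintype_card, Sym2.card, Fintype.card_fin,
    Nat.choose_two_right, Nat.add_sub_cancel, mul_comm]

section StandardFlags

variable {n : ℕ}

theorem stdVec_succ (m : Fin n) : stdVec n (m + 1) = Pi.basisFun ℂ (Fin n) m := by
  simp [stdVec]

theorem stdSub_eq_initialSpan {k : ℕ} (hk : k ≤ n) :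
    stdSub n k = initialSpan ℂ (Pi.basisFun ℂ (Fin n)) k := by
  rw [stdSub, initialSpan]
  congr 1
  ext x
  constructor
  · rintro ⟨m, ⟨hm, hmk⟩, rfl⟩
    refine ⟨⟨m - 1, by omega⟩, show m - 1 < k by omega, ?_⟩
    rw [← stdVec_succ, Nat.sub_add_cancel hm]
  · rintro ⟨m, hm, rfl⟩
    exact ⟨m + 1, ⟨m.val.succ_pos, hm⟩, stdVec_succ m⟩

theorem isCompleteFlag_iff_mem_fullFlags {V : ℕ → Submodule ℂ (Fin n → ℂ)} :
    IsCompleteFlag n V ↔ V ∈ fullFlags ℂ (Fin n → ℂ) := by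
  change _ ↔ Monotone V ∧ ∀ k, finrank ℂ (V k) = min k (finrank ℂ (Fin n → ℂ))
  rw [finrank_fin_fun]
  constructor
  · rintro ⟨hdim, hle, hconst⟩
    refine ⟨monotone_nat_of_le_succ hle, fun k => ?_⟩
    obtain hk | hk := le_total k n
    · rw [hdim k hk, min_eq_left hk]
    · rw [hconst k hk, hdim n le_rfl, min_eq_right hk]
  · rintro ⟨hmono, hdim⟩
    refine ⟨fun k hk => by rw [hdim, min_eq_left hk], fun k => hmono k.le_succ, fun k hk => ?_⟩
    exact (eq_of_le_of_finrank_eq (hmono hk) (by rw [hdim, hdim, min_self, min_eq_right hk])).symm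

theorem mem_Ksub_iff_mem_pairStabilizer {g : (Fin (n + 1) → ℂ) ≃ₗ[ℂ] (Fin (n + 1) → ℂ)} :
    g ∈ Ksub (n + 1) ↔ g ∈ pairStabilizer (Pi.basisFun ℂ (Fin (n + 1)) (Fin.last n))
      (LinearMap.ker ((Pi.basisFun ℂ (Fin (n + 1))).coord (Fin.last n))) := by
  rw [← stdVec_succ, ← initialSpan_eq_ker_coord_last, ← stdSub_eq_initialSpan n.le_succ]
  rfl

/-- The orbit space of the concrete action of `Ksub` on flags in `ℂ^(n+1)`, as an orbit space for
the stabilizer of a vector and a hyperplane. -/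
def flagOrbitSpaceEquiv (n : ℕ) : FlagOrbitSpace (n + 1) ≃ MulAction.orbitRel.Quotient
    (pairStabilizer (Pi.basisFun ℂ (Fin (n + 1)) (Fin.last n))
      (LinearMap.ker ((Pi.basisFun ℂ (Fin (n + 1))).coord (Fin.last n))))
    (fullFlags ℂ (Fin (n + 1) → ℂ)) :=
  Quot.congr (Equiv.subtypeEquivRight fun _ => isCompleteFlag_iff_mem_fullFlags) fun _ _ =>
    Iff.trans ⟨fun ⟨g, hg, h⟩ => ⟨⟨g, mem_Ksub_iff_mem_pairStabilizer.mp hg⟩, Subtype.ext h⟩,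
      fun ⟨g, h⟩ => ⟨g, mem_Ksub_iff_mem_pairStabilizer.mpr g.2, congrArg Subtype.val h⟩⟩
      (Setoid.comm' _)

end StandardFlags

/-- The action of `K` on the complete flags in `ℂ^n` has exactly
`n(n+1)/2 = binomial(n+1,2)` orbits. -/
theorem stmt_0 (n : ℕ) (hn : 2 ≤ n) :
    Finite (FlagOrbitSpace n) ∧ Nat.card (FlagOrbitSpace n) = n * (n + 1) / 2 := by
  obtain ⟨m, rfl⟩ : ∃ m, n = m + 1 := ⟨n - 1, by omega⟩
  let b := Pi.basisFun ℂ (Fin (m + 1))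
  obtain ⟨hfin, hcard⟩ := stmt_0_general (φ := b.coord (Fin.last m)) (e := b (Fin.last m)) (by simp)
  rw [finrank_fin_fun] at hcard
  let f := flagOrbitSpaceEquiv m
  exact ⟨.of_equiv _ f.symm, (Nat.card_congr f).trans hcard⟩
end
end

section
/- For every integer l ≥ 2, the action of K on the set of maximal isotropic flags in ℂ^{2l+1} has exactly l+2 orbits: the quotient of the set of maximal isotropic flags by the K-action is finite of cardinality l+2. -/
open Module Submodule

noncomputable section

/-- The symmetric bilinear form `β(x,y) = ∑_{k=1}^n x_k y_{n+1-k}` on `ℂ^n`. -/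
def betaF (n : ℕ) (x y : Fin n → ℂ) : ℂ := ∑ k : Fin n, x k * y k.rev

/-- `SO(n,ℂ)` for the form `β`. -/
def SOgrp (n : ℕ) : Set ((Fin n → ℂ) ≃ₗ[ℂ] (Fin n → ℂ)) :=
  {g | LinearMap.det g.toLinearMap = 1 ∧ ∀ x y, betaF n (g x) (g y) = betaF n x y}

/-- A maximal isotropic flag `V 1 ⊂ ⋯ ⊂ V l` in `ℂ^n` (values pinned outside `1..l`
so that two flags are equal iff they agree in degrees `1, …, l`). -/
def IsIsoFlag (n l : ℕ) (V : ℕ → Submodule ℂ (Fin n → ℂ)) : Prop :=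
  (∀ i, i ≤ l → finrank ℂ ↥(V i) = i) ∧ (∀ i, V i ≤ V (i + 1)) ∧ (∀ i, l ≤ i → V i = V l) ∧
    (∀ u ∈ V l, ∀ w ∈ V l, betaF n u w = 0)

/-- The isotropic flag `(v 1 ⊂ ⋯ ⊂ v l)` spanned by `v 1, …, v l`. -/
def isoFlagOf (n l : ℕ) (v : ℕ → Fin n → ℂ) (k : ℕ) : Submodule ℂ (Fin n → ℂ) :=
  span ℂ (v '' Set.Icc 1 (min k l))

/-- `K = {g ∈ SO(2l+1) : g e_0 = e_0}` (here `e_0 = e_{l+1}`), a copy of `SO(2l)`. -/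
def Kodd (l : ℕ) : Set ((Fin (2 * l + 1) → ℂ) ≃ₗ[ℂ] (Fin (2 * l + 1) → ℂ)) :=
  {g | g ∈ SOgrp (2 * l + 1) ∧
       g (stdVec (2 * l + 1) (l + 1)) = stdVec (2 * l + 1) (l + 1)}

/-- `V'` lies in the `K`-orbit of `V`. -/
def InKOddOrbit (l : ℕ) (V V' : ℕ → Submodule ℂ (Fin (2 * l + 1) → ℂ)) : Prop :=
  ∃ g ∈ Kodd l, actFlag (2 * l + 1) g V = V'

/-- The set of `K`-orbits of maximal isotropic flags in `ℂ^{2l+1}`. -/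
def IsoOrbitSpaceOdd (l : ℕ) : Type :=
  Quot fun F F' : {V : ℕ → Submodule ℂ (Fin (2 * l + 1) → ℂ) // IsIsoFlag (2 * l + 1) l V} =>
    InKOddOrbit l F.1 F'.1

/-!
The largest `t` for which `V_t` is orthogonal to `e_0` takes, on flags `V`, the values `0, …, l`
and, by Witt's extension theorem, is a complete invariant for the stabilizer of `e_0` in the full
orthogonal group: a basis adapted to `V` can be normalised so that its pairing with `e_0` depends
on `t` alone. So that stabilizer has `l + 1` orbits.

Passing to the subgroup `K` of determinant `1`, an orbit splits in two exactly when the isometries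
fixing `e_0` and `V` all have determinant `1`. If `V_l` is not orthogonal to `e_0`, then
`(V_l + ℂ e_0)^⊥` contains an anisotropic vector, whose reflection fixes `e_0` and `V`.
If `V_l` is orthogonal to `e_0`, the determinant on `V_l` cancels against the one on
`ℂ^{2l+1} / V_l`. Hence only the orbit `t = l` splits.
-/

open scoped Pointwise
open LinearMap (BilinForm)

section LinearAlgebra

variable {F E P : Type*} [Field F] [AddCommGroup E] [Module F E] [AddCommGroup P] [Module F P]

lemma det_eq_of_forall_apply_comm (e : E ≃ₗ[F] P) {f : E →ₗ[F] E} {f' : P →ₗ[F] P}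
    (h : ∀ x, e (f x) = f' (e x)) : LinearMap.det f = LinearMap.det f' := by
  rw [← LinearMap.det_conj f e]
  congr 1
  ext y
  simp [h]

lemma det_eq_det_restrict_mul_det_of_surjective [FiniteDimensional F E] {f : E →ₗ[F] E}
    {p : E →ₗ[F] P} {f' : P →ₗ[F] P} {W : Submodule F E} (hp : Function.Surjective p)
    (hker : LinearMap.ker p = W) (hf : W ≤ W.comap f) (h : ∀ x, p (f x) = f' (p x)) :
    LinearMap.det f = LinearMap.det (f.restrict hf) * LinearMap.det f' := by
  subst hker
  rw [LinearMap.det_eq_det_mul_det _ f hf]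
  congr 1
  refine det_eq_of_forall_apply_comm (p.quotKerEquivOfSurjective hp) fun x ↦ ?_
  induction x using Submodule.Quotient.induction_on with
  | H x => simp [h]

end LinearAlgebra

section Isometry

variable {F E : Type*} [Field F] [AddCommGroup E] [Module F E]

/-- The group `O(B)` of linear automorphisms preserving the bilinear form `B`. -/
def isometryGroup (B : BilinForm F E) : Subgroup (E ≃ₗ[F] E) where
  carrier := {g | B.IsOrthogonal g}
  one_mem' _ _ := rfl
  mul_mem' hg hh x y := (hg _ _).trans (hh x y)
  inv_mem' {g} hg x y := by
    rw [← hg]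
    exact congrArg₂ (fun u v ↦ B u v) (g.apply_symm_apply x) (g.apply_symm_apply y)

variable {B : BilinForm F E}

lemma isometry_apply_smul_smul (g : isometryGroup B) (x y : E) : B (g • x) (g • y) = B x y :=
  g.2 x y

lemma isometry_smul_eq_map (g : isometryGroup B) (W : Submodule F E) :
    g • W = W.map (g : E ≃ₗ[F] E).toLinearMap :=
  rfl

lemma isometry_smul_mem_orthogonal_smul_iff (g : isometryGroup B) {x : E} {W : Submodule F E} :
    g • x ∈ B.orthogonal (g • W) ↔ x ∈ B.orthogonal W := by
  simp only [LinearMap.BilinForm.mem_orthogonal_iff]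
  constructor
  · intro h w hw
    simpa only [isometry_apply_smul_smul] using h _ (smul_mem_pointwise_smul w g W hw)
  · rintro h _ ⟨w, hw, rfl⟩
    exact (isometry_apply_smul_smul g w x).trans (h w hw)

lemma isometry_smul_mem_smul_iff (g : isometryGroup B) {x : E} {W : Submodule F E} :
    g • x ∈ g • W ↔ x ∈ W :=
  Set.smul_mem_smul_set_iff (s := (W : Set E))

lemma isometry_smul_span_image (g : isometryGroup B) {ι : Type*} (v : ι → E) (s : Set ι) :
    g • span F (v '' s) = span F ((fun i ↦ g • v i) '' s) := by
  rw [isometry_smul_eq_map, map_span, Set.image_image]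
  rfl

lemma mem_orthogonal_span_image_iff {ι : Type*} {v : ι → E} {s : Set ι} {y : E} :
    y ∈ B.orthogonal (span F (v '' s)) ↔ ∀ i ∈ s, B (v i) y = 0 :=
  (span_le (p := LinearMap.ker (LinearMap.flip B y))).trans Set.image_subset_iff

lemma mem_orthogonal_sup_span_singleton_iff {W : Submodule F E} {x y : E} :
    y ∈ B.orthogonal (W ⊔ span F {x}) ↔ y ∈ B.orthogonal W ∧ B x y = 0 := by
  constructor
  · intro h
    exact ⟨BilinForm.orthogonal_le le_sup_left h,
      h x (mem_sup_right (mem_span_singleton_self x))⟩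
  · rintro ⟨hW, hx⟩ _ hz
    obtain ⟨w, hw, _, hc, rfl⟩ := mem_sup.1 hz
    obtain ⟨c, rfl⟩ := mem_span_singleton.1 hc
    simp [hx, hW w hw]

section Nondegenerate

variable [FiniteDimensional F E]

lemma det_isometry_eq_one_or_eq_neg_one (hnd : B.Nondegenerate) (g : isometryGroup B) :
    LinearEquiv.det (g : E ≃ₗ[F] E) = 1 ∨ LinearEquiv.det (g : E ≃ₗ[F] E) = -1 := by
  have det_inv : LinearMap.det (g : E ≃ₗ[F] E).toLinearMap =
      LinearMap.det (g : E ≃ₗ[F] E).symm.toLinearMap := by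
    rw [← LinearMap.det_dualMap (g : E ≃ₗ[F] E).symm.toLinearMap]
    refine det_eq_of_forall_apply_comm (B.toDual hnd) fun x ↦ LinearMap.ext fun y ↦ ?_
    simpa [LinearMap.BilinForm.toDual_def] using g.2 x ((g : E ≃ₗ[F] E).symm y)
  rw [← Units.inv_eq_self_iff, ← map_inv]
  exact Units.ext ((LinearEquiv.coe_det _).trans (det_inv.symm.trans (LinearEquiv.coe_det _).symm))

lemma exists_mem_orthogonal_apply_eq_one (hB : B.IsSymm) (hnd : B.Nondegenerate)
    {H : Submodule F E} {x : E} (hx : x ∉ H) : ∃ y ∈ B.orthogonal H, B y x = 1 := by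
  rw [← B.orthogonal_orthogonal hnd hB.isRefl H, LinearMap.BilinForm.mem_orthogonal_iff] at hx
  push Not at hx
  obtain ⟨y, hy, hyx⟩ := hx
  exact ⟨(B y x)⁻¹ • y, smul_mem _ _ hy, by simp [hyx]⟩

lemma exists_forall_apply_eq_ite (hB : B.IsSymm) (hnd : B.Nondegenerate) {ι : Type*}
    [DecidableEq ι] {b : ι → E} (hb : LinearIndependent F b) (i : ι) :
    ∃ y, ∀ j, B (b j) y = if j = i then 1 else 0 := by
  obtain ⟨y, hy, hyi⟩ := exists_mem_orthogonal_apply_eq_one hB hnd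
    (hb.notMem_span_image (s := {i}ᶜ) (x := i) (by simp))
  refine ⟨y, fun j ↦ ?_⟩
  split_ifs with hj
  · rw [hj, hB.eq, hyi]
  · exact mem_orthogonal_span_image_iff.1 hy j hj

lemma apply_self_ne_zero_of_mem_orthogonal (hB : B.IsSymm) (hnd : B.Nondegenerate)
    {W : Submodule F E} (hW : W ≤ B.orthogonal W) (hdim : finrank F E ≤ 2 * finrank F W + 1)
    {x : E} (hx : x ∈ B.orthogonal W) (hxW : x ∉ W) : B x x ≠ 0 := by
  intro hxx
  have isotropic : W ⊔ span F {x} ≤ B.orthogonal (W ⊔ span F {x}) := by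
    refine sup_le (fun w hw ↦ ?_) ((span_singleton_le_iff_mem _ _).2 ?_)
    · exact mem_orthogonal_sup_span_singleton_iff.2 ⟨hW hw, (hB.eq w x).symm.trans (hx w hw)⟩
    · exact mem_orthogonal_sup_span_singleton_iff.2 ⟨hx, hxx⟩
  have hle := Submodule.finrank_mono isotropic
  rw [LinearMap.BilinForm.finrank_orthogonal hnd, finrank_sup_span_singleton hxW] at hle
  omega

end Nondegenerate

section Reflection

variable [NeZero (2 : F)]

/-- The reflection `x ↦ x - 2 B(r, x) / B(r, r) • r` in the hyperplane orthogonal to an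
anisotropic vector `r`, as an element of `O(B)`. -/
def orthogonalReflection (hB : B.IsSymm) {r : E} (hr : B r r ≠ 0) : isometryGroup B :=
  ⟨Module.reflection (x := r) (f := (2 / B r r) • B r) (by simp [hr]),
    LinearMap.isOrthogonal_of_forall_apply_same _ (IsRegular.of_ne_zero two_ne_zero).left
      (BilinForm.isSymm_iff.1 hB) fun x ↦ by
      simp only [Module.reflection_apply, map_sub, map_smul, LinearMap.sub_apply,
        LinearMap.smul_apply, smul_eq_mul, hB.eq x r]
      field_simp
      ring⟩

lemma orthogonalReflection_smul (hB : B.IsSymm) {r : E} (hr : B r r ≠ 0) (x : E) :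
    orthogonalReflection hB hr • x = x - (2 / B r r * B r x) • r :=
  rfl

lemma orthogonalReflection_smul_of_apply_eq_zero (hB : B.IsSymm) {r : E} (hr : B r r ≠ 0) {x : E}
    (hx : B r x = 0) : orthogonalReflection hB hr • x = x := by
  simp [orthogonalReflection_smul, hx]

lemma orthogonalReflection_sub_smul (hB : B.IsSymm) {x y : E} (hxy : B x x = B y y)
    (hr : B (x - y) (x - y) ≠ 0) : orthogonalReflection hB hr • x = y := by
  have key : B (x - y) (x - y) = 2 * B (x - y) x := by
    simp only [map_sub, LinearMap.sub_apply, hB.eq x y, hxy]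
    ring
  have : 2 / B (x - y) (x - y) * B (x - y) x = 1 := by
    rw [div_mul_eq_mul_div, ← key, div_self hr]
  rw [orthogonalReflection_smul, this, one_smul, sub_sub_cancel]

lemma det_orthogonalReflection [FiniteDimensional F E] (hB : B.IsSymm) {r : E} (hr : B r r ≠ 0) :
    LinearEquiv.det (orthogonalReflection hB hr : E ≃ₗ[F] E) = -1 := by
  refine Units.ext ((LinearEquiv.coe_det _).trans ?_)
  have : (orthogonalReflection hB hr : E ≃ₗ[F] E).toLinearMap =
      LinearMap.transvection (-(2 / B r r) • B r) r := by
    ext x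
    simp [orthogonalReflection, Module.reflection_apply, LinearMap.transvection.apply,
      sub_eq_add_neg]
  rw [this, LinearMap.transvection.det, LinearMap.smul_apply, smul_eq_mul, neg_mul,
    div_mul_cancel₀ _ hr, Units.val_neg, Units.val_one]
  norm_num

end Reflection

lemma exists_isometry_of_isOrthogonal [FiniteDimensional F E] (hnd : B.Nondegenerate)
    {f : E →ₗ[F] E} (hf : B.IsOrthogonal f) : ∃ g : isometryGroup B, ∀ x, g • x = f x := by
  have inj : Function.Injective f := by
    refine (injective_iff_map_eq_zero f).2 fun x hx ↦ hnd.1 x fun y ↦ ?_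
    rw [← hf, hx, map_zero, LinearMap.zero_apply]
  exact ⟨⟨LinearEquiv.ofInjectiveEndo f inj, hf⟩, fun _ ↦ rfl⟩

/-- These are the Eichler (or Siegel) transformations attached to an isotropic vector `p`. -/
lemma exists_isometry_smul_eq_eichler [FiniteDimensional F E] [NeZero (2 : F)] (hB : B.IsSymm)
    (hnd : B.Nondegenerate) {p u : E} (hp : B p p = 0) (hpu : B p u = 0) :
    ∃ g : isometryGroup B, ∀ x,
      g • x = x + B p x • u - (B u x + B u u / 2 * B p x) • p := by
  refine exists_isometry_of_isOrthogonal hnd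
    (f := .id + (B p).smulRight u - (B u + (B u u / 2) • B p).smulRight p)
    (LinearMap.isOrthogonal_of_forall_apply_same _ (IsRegular.of_ne_zero two_ne_zero).left
      (BilinForm.isSymm_iff.1 hB) fun x ↦ ?_)
  have hup : B u p = 0 := (hB.eq p u).symm.trans hpu
  simp only [LinearMap.sub_apply, LinearMap.add_apply, LinearMap.id_coe, id_eq,
    LinearMap.coe_smulRight, LinearMap.smul_apply, smul_eq_mul, map_sub, map_add, map_smul,
    hB.eq x u, hB.eq x p, hup, mul_zero, sub_zero, hpu, add_zero, hp]
  field_simp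
  ring

section Witt

variable [NeZero (2 : F)]

lemma exists_isometry_fixing_of_anisotropic_sub (hB : B.IsSymm) {H : Submodule F E} {x y : E}
    (hxy : B x x = B y y) (hH : ∀ h ∈ H, B h x = B h y) (hr : B (x - y) (x - y) ≠ 0) :
    ∃ g : isometryGroup B, (∀ h ∈ H, g • h = h) ∧ g • x = y := by
  refine ⟨orthogonalReflection hB hr, fun h hh ↦ ?_, orthogonalReflection_sub_smul hB hxy hr⟩
  apply orthogonalReflection_smul_of_apply_eq_zero
  rw [hB.eq, map_sub, hH h hh, sub_self]

variable [FiniteDimensional F E]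

/-- Moving `p` to a hyperbolic partner `q` and then `q` to `c • p` uses two reflections. -/
lemma exists_isometry_fixing_smul_eq_smul (hB : B.IsSymm) (hnd : B.Nondegenerate)
    {H : Submodule F E} {p : E} (hpH : p ∉ H) (hHp : p ∈ B.orthogonal H) (hp : B p p = 0)
    {c : F} (hc : c ≠ 0) : ∃ g : isometryGroup B, (∀ h ∈ H, g • h = h) ∧ g • p = c • p := by
  obtain ⟨z, hzH, hzp⟩ := exists_mem_orthogonal_apply_eq_one hB hnd hpH
  have hpz : B p z = 1 := (hB.eq z p).symm.trans hzp
  set q := z - (B z z / 2) • p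
  have hqp : B q p = 1 := by simp [q, hp, hzp]
  have hpq : B p q = 1 := (hB.eq q p).symm.trans hqp
  have hq : B q q = 0 := by
    simp only [q, map_sub, map_smul, LinearMap.sub_apply, LinearMap.smul_apply, smul_eq_mul, hp,
      hzp, hpz]
    field_simp
    ring
  have hHq : q ∈ B.orthogonal H := sub_mem hzH (smul_mem _ _ hHp)
  obtain ⟨g₁, hg₁H, hg₁⟩ := exists_isometry_fixing_of_anisotropic_sub hB (H := H) (hp.trans hq.symm)
    (fun h hh ↦ (hHp h hh).trans (hHq h hh).symm)
    (by simp [hp, hq, hpq, hqp, ← neg_add', one_add_one_eq_two, two_ne_zero])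
  obtain ⟨g₂, hg₂H, hg₂⟩ := exists_isometry_fixing_of_anisotropic_sub hB (H := H) (x := q)
    (y := c • p) (by simp [hp, hq]) (fun h hh ↦ by simp [hHp h hh, hHq h hh])
    (by simp [hp, hq, hpq, hqp, hc, ← neg_add', ← two_mul, two_ne_zero])
  exact ⟨g₂ * g₁, fun h hh ↦ by rw [mul_smul, hg₁H h hh, hg₂H h hh], by rw [mul_smul, hg₁, hg₂]⟩

lemma exists_isometry_fixing_smul_eq_add_of_mem_sup (hB : B.IsSymm) (hnd : B.Nondegenerate)
    {H : Submodule F E} {x p : E} (hx : x ∉ H) (hxp : x + p ∉ H) (hp : B p p = 0)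
    (hHp : p ∈ B.orthogonal H) (hmem : x ∈ H ⊔ span F {p}) :
    ∃ g : isometryGroup B, (∀ h ∈ H, g • h = h) ∧ g • x = x + p := by
  obtain ⟨h, hh, _, hc, rfl⟩ := mem_sup.1 hmem
  obtain ⟨c, rfl⟩ := mem_span_singleton.1 hc
  have hpH : p ∉ H := fun h' ↦ hx (add_mem hh (smul_mem _ c h'))
  have hc : c ≠ 0 := by
    rintro rfl
    simp [hh] at hx
  have hc' : c + 1 ≠ 0 := by
    intro h0
    have : c • p + p = 0 := by rw [← zero_smul F p, ← h0, add_smul, one_smul]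
    rw [add_assoc, this, add_zero] at hxp
    exact hxp hh
  obtain ⟨g, hgH, hg⟩ := exists_isometry_fixing_smul_eq_smul hB hnd hpH hHp hp (div_ne_zero hc' hc)
  refine ⟨g, hgH, ?_⟩
  rw [smul_add, hgH h hh, smul_comm g c p, hg, smul_smul, mul_div_cancel₀ _ hc, add_smul,
    one_smul, add_assoc]

/-- The one-vector step of Witt's extension theorem. If `p = y - x` is anisotropic a reflection
works; otherwise an Eichler transformation or, when `x` lies in the span of `H` and `p`, a scaling
of `p` does. -/
theorem exists_isometry_fixing_smul_eq (hB : B.IsSymm) (hnd : B.Nondegenerate)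
    {H : Submodule F E} {x y : E} (hx : x ∉ H) (hy : y ∉ H) (hxy : B x x = B y y)
    (hH : ∀ h ∈ H, B h x = B h y) :
    ∃ g : isometryGroup B, (∀ h ∈ H, g • h = h) ∧ g • x = y := by
  by_cases hr : B (x - y) (x - y) = 0
  swap
  · exact exists_isometry_fixing_of_anisotropic_sub hB hxy hH hr
  obtain ⟨p, rfl⟩ : ∃ p, y = x + p := ⟨y - x, (add_sub_cancel x y).symm⟩
  have hp : B p p = 0 := by simpa using hr
  have hHp : p ∈ B.orthogonal H := fun h hh ↦ by simpa using hH h hh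
  by_cases hmem : x ∈ H ⊔ span F {p}
  · exact exists_isometry_fixing_smul_eq_add_of_mem_sup hB hnd hx hy hp hHp hmem
  have hpx : B p x = 0 := by
    have : 2 * B p x = 0 := by
      simp only [map_add, LinearMap.add_apply, hp, hB.eq x p] at hxy
      linear_combination -hxy
    simpa [two_ne_zero] using this
  obtain ⟨u, hu, hux⟩ := exists_mem_orthogonal_apply_eq_one hB hnd hmem
  obtain ⟨huH, hpu⟩ := mem_orthogonal_sup_span_singleton_iff.1 hu
  obtain ⟨g, hg⟩ := exists_isometry_smul_eq_eichler hB hnd (u := -u) hp (by simp [hpu])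
  refine ⟨g, fun h hh ↦ ?_, by simp [hg, hpx, hux]⟩
  have hph : B p h = 0 := (hB.eq h p).symm.trans (hHp h hh)
  have huh : B u h = 0 := (hB.eq h u).symm.trans (huH h hh)
  simp [hg, hph, huh]

/-- Witt's extension theorem. -/
theorem exists_isometry_forall_smul_eq (hB : B.IsSymm) (hnd : B.Nondegenerate) {ι : Type*}
    [Finite ι] {a b : ι → E} (ha : LinearIndependent F a) (hb : LinearIndependent F b)
    (hab : ∀ i j, B (a i) (a j) = B (b i) (b j)) : ∃ g : isometryGroup B, ∀ i, g • a i = b i := by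
  classical
  have := Fintype.ofFinite ι
  suffices ∀ s : Finset ι, ∃ g : isometryGroup B, ∀ i ∈ s, g • a i = b i by
    simpa using this Finset.univ
  intro s
  induction s using Finset.induction with
  | empty => simp
  | insert j s hj ih =>
    obtain ⟨g, hg⟩ := ih
    have hgs : g • span F (a '' s) = span F (b '' s) := by
      rw [isometry_smul_span_image, Set.image_congr hg]
    have hgj : g • a j ∉ span F (b '' s) := by
      rw [← hgs, isometry_smul_mem_smul_iff]
      exact ha.notMem_span_image hj
    have hortho : ∀ h ∈ span F (b '' s), B h (g • a j) = B h (b j) := by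
      refine LinearMap.eqOn_span (f := LinearMap.flip B (g • a j)) (g := LinearMap.flip B (b j)) ?_
      rintro _ ⟨i, hi, rfl⟩
      rw [LinearMap.flip_apply, LinearMap.flip_apply, ← hg i hi, isometry_apply_smul_smul, hab,
        hg i hi]
    obtain ⟨g', hg's, hg'j⟩ := exists_isometry_fixing_smul_eq hB hnd hgj (hb.notMem_span_image hj)
      ((isometry_apply_smul_smul g _ _).trans (hab j j)) hortho
    refine ⟨g' * g, fun i hi ↦ ?_⟩
    rw [mul_smul]
    obtain rfl | hi := Finset.mem_insert.1 hi
    · exact hg'j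
    · rw [hg i hi, hg's _ (subset_span ⟨i, hi, rfl⟩)]

end Witt

end Isometry

section Flag

variable {F E : Type*} [Field F] [AddCommGroup E] [Module F E] {B : BilinForm F E}

/-- An isotropic flag `V 0 ≤ V 1 ≤ ⋯ ≤ V l` with `dim (V i) = i` for a bilinear form. As in
`IsIsoFlag`, the flag is indexed by all natural numbers and constant from `l` on. -/
@[ext]
structure IsotropicFlag (B : BilinForm F E) (l : ℕ) where
  /-- The subspaces of the flag. -/
  toFun : ℕ → Submodule F E
  finrank_eq' : ∀ i ≤ l, finrank F (toFun i) = i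
  le_succ' : ∀ i, toFun i ≤ toFun (i + 1)
  eq_of_le' : ∀ i, l ≤ i → toFun i = toFun l
  isotropic' : toFun l ≤ B.orthogonal (toFun l)

namespace IsotropicFlag

variable {l : ℕ}

instance : CoeFun (IsotropicFlag B l) fun _ ↦ ℕ → Submodule F E := ⟨toFun⟩

lemma finrank_eq (V : IsotropicFlag B l) {i : ℕ} (hi : i ≤ l) : finrank F (V i) = i :=
  V.finrank_eq' i hi

lemma monotone (V : IsotropicFlag B l) : Monotone V :=
  monotone_nat_of_le_succ V.le_succ'

lemma isotropic (V : IsotropicFlag B l) : V l ≤ B.orthogonal (V l) :=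
  V.isotropic'

lemma apply_eq_zero (V : IsotropicFlag B l) {x y : E} (hx : x ∈ V l) (hy : y ∈ V l) : B x y = 0 :=
  V.isotropic hy x hx

lemma notMem_of_apply_self_ne_zero (V : IsotropicFlag B l) {e : E} (he : B e e ≠ 0) : e ∉ V l :=
  fun h ↦ he (V.apply_eq_zero h h)

lemma zero_eq_bot [FiniteDimensional F E] (V : IsotropicFlag B l) : V 0 = ⊥ :=
  Submodule.finrank_eq_zero.1 (V.finrank_eq l.zero_le)

lemma ext_of_le {V V' : IsotropicFlag B l} (h : ∀ i ≤ l, V i = V' i) : V = V' := by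
  ext1
  funext i
  obtain hi | hi := le_total i l
  · exact h i hi
  · rw [V.eq_of_le' i hi, V'.eq_of_le' i hi, h l le_rfl]

lemma exists_mem_succ_notMem (V : IsotropicFlag B l) {i : ℕ} (hi : i < l) :
    ∃ x ∈ V (i + 1), x ∉ V i := by
  refine SetLike.exists_of_lt (lt_of_le_of_ne (V.le_succ' i) fun h ↦ ?_)
  have := congrArg (fun W : Submodule F E ↦ finrank F W) h
  simp only [V.finrank_eq hi, V.finrank_eq hi.le] at this
  omega

instance : MulAction (isometryGroup B) (IsotropicFlag B l) where
  smul g V :=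
    { toFun := fun i ↦ g • V i
      finrank_eq' := fun i hi ↦
        ((g : E ≃ₗ[F] E).finrank_map_eq (V i)).trans (V.finrank_eq hi)
      le_succ' := fun i ↦ map_mono (V.le_succ' i)
      eq_of_le' := fun i hi ↦ congrArg (g • ·) (V.eq_of_le' i hi)
      isotropic' := by
        rintro _ ⟨w, hw, rfl⟩
        exact (isometry_smul_mem_orthogonal_smul_iff g).2 (V.isotropic hw) }
  one_smul V := IsotropicFlag.ext (funext fun i ↦ one_smul _ (V i))
  mul_smul g h V := IsotropicFlag.ext (funext fun i ↦ mul_smul g h (V i))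

lemma smul_apply (g : isometryGroup B) (V : IsotropicFlag B l) (i : ℕ) : (g • V) i = g • V i :=
  rfl

section Level

open Classical in
/-- The largest `k ≤ l` such that the `k`-th subspace of the flag is orthogonal to `e`. This is the
invariant that classifies the orbits of the stabilizer of `e`. -/
def level (V : IsotropicFlag B l) (e : E) : Fin (l + 1) :=
  ⟨Nat.findGreatest (fun k ↦ e ∈ B.orthogonal (V k)) l, Nat.lt_succ_of_le (Nat.findGreatest_le l)⟩

variable [FiniteDimensional F E]

lemma le_level_iff (V : IsotropicFlag B l) {e : E} {k : ℕ} (hk : k ≤ l) :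
    k ≤ V.level e ↔ e ∈ B.orthogonal (V k) := by
  classical
  have h0 : e ∈ B.orthogonal (V 0) := by simp [V.zero_eq_bot]
  exact ⟨fun h ↦ BilinForm.orthogonal_le (V.monotone h)
    (Nat.findGreatest_spec (P := fun k ↦ e ∈ B.orthogonal (V k)) l.zero_le h0),
    fun h ↦ Nat.le_findGreatest (P := fun k ↦ e ∈ B.orthogonal (V k)) hk h⟩

lemma level_eq_of_forall_iff {V : IsotropicFlag B l} {e : E} {t : Fin (l + 1)}
    (h : ∀ k ≤ l, e ∈ B.orthogonal (V k) ↔ k ≤ t) : V.level e = t :=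
  le_antisymm ((h _ (V.level e).is_le).1 ((V.le_level_iff (V.level e).is_le).1 le_rfl))
    ((V.le_level_iff t.is_le).2 ((h _ t.is_le).2 le_rfl))

lemma level_eq_last_iff (V : IsotropicFlag B l) {e : E} :
    V.level e = Fin.last l ↔ e ∈ B.orthogonal (V l) := by
  rw [← V.le_level_iff le_rfl, ← Fin.last_le_iff]
  rfl

lemma level_smul_smul (g : isometryGroup B) (V : IsotropicFlag B l) (e : E) :
    (g • V).level (g • e) = V.level e :=
  level_eq_of_forall_iff fun k hk ↦ by
    rw [V.le_level_iff hk, smul_apply, isometry_smul_mem_orthogonal_smul_iff]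

end Level

section Basis

variable [FiniteDimensional F E]

lemma eq_span_image {V : IsotropicFlag B l} {v : Fin l → E}
    (hv : ∀ i : Fin l, v i ∈ V (i + 1)) (hv' : ∀ i : Fin l, v i ∉ V i) {k : ℕ} (hk : k ≤ l) :
    V k = span F (v '' {i | i < k}) := by
  induction k with
  | zero => simp [V.zero_eq_bot]
  | succ k ih =>
    have hset : {i : Fin l | (i : ℕ) < k + 1} = insert ⟨k, hk⟩ {i : Fin l | (i : ℕ) < k} := by
      ext i
      simp only [Set.mem_insert_iff, Set.mem_ofPred_eq, Fin.ext_iff]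
      omega
    rw [hset, Set.image_insert_eq, span_insert, ← ih (Nat.le_of_succ_le hk), sup_comm]
    refine (eq_of_le_of_finrank_eq (sup_le (V.le_succ' k) ?_) ?_).symm
    · exact (span_singleton_le_iff_mem _ _).2 (hv ⟨k, hk⟩)
    · rw [finrank_sup_span_singleton (hv' ⟨k, hk⟩), V.finrank_eq hk,
        V.finrank_eq (Nat.le_of_succ_le hk)]

lemma exists_mem_succ_notMem_apply_eq (V : IsotropicFlag B l) (e : E) {i : ℕ} (hi : i < l) :
    ∃ x ∈ V (i + 1), x ∉ V i ∧ B x e = if i = V.level e then 1 else 0 := by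
  have hlevel : (V.level e : ℕ) < l → ∃ y ∈ V (V.level e + 1), B y e = 1 := by
    intro ht
    have := mt (V.le_level_iff (Nat.succ_le_of_lt ht)).2 (Nat.not_succ_le_self _)
    rw [LinearMap.BilinForm.mem_orthogonal_iff] at this
    push Not at this
    obtain ⟨y, hy, hye⟩ := this
    exact ⟨(B y e)⁻¹ • y, smul_mem _ _ hy, by simp [hye]⟩
  obtain ⟨x, hx, hxV⟩ := V.exists_mem_succ_notMem hi
  obtain hlt | heq | hgt := lt_trichotomy i (V.level e)
  · exact ⟨x, hx, hxV, by rw [if_neg hlt.ne, (V.le_level_iff hi).1 hlt x hx]⟩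
  · obtain ⟨y, hy, hye⟩ := hlevel (heq ▸ hi)
    refine ⟨y, heq ▸ hy, fun hyV ↦ ?_, by rw [if_pos heq, hye]⟩
    exact one_ne_zero (hye.symm.trans ((V.le_level_iff hi.le).1 heq.le y hyV))
  · obtain ⟨y, hy, hye⟩ := hlevel (hgt.trans hi)
    have hyV : y ∈ V i := V.monotone hgt hy
    refine ⟨x - B x e • y, sub_mem hx (smul_mem _ _ (V.le_succ' i hyV)), fun h ↦ hxV ?_, ?_⟩
    · simpa using add_mem h (smul_mem _ (B x e) hyV)
    · simp [hye, hgt.ne']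

lemma exists_adapted_basis (V : IsotropicFlag B l) (e : E) :
    ∃ v : Fin l → E, LinearIndependent F v ∧ (∀ k ≤ l, V k = span F (v '' {i | i < k})) ∧
      ∀ i : Fin l, B (v i) e = if (i : ℕ) = V.level e then 1 else 0 := by
  choose v hv hv' hve using fun i : Fin l ↦ V.exists_mem_succ_notMem_apply_eq e i.is_lt
  have hspan := fun k (hk : k ≤ l) ↦ eq_span_image hv hv' hk
  refine ⟨v, ?_, hspan, hve⟩
  have hrange : V l = span F (Set.range v) := by simp [hspan l le_rfl]
  rw [linearIndependent_iff_card_eq_finrank_span, Set.finrank, ← hrange, V.finrank_eq le_rfl,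
    Fintype.card_fin]

end Basis

end IsotropicFlag

namespace IsotropicFlag

variable {l : ℕ}

/-- The flag of the spans of the initial segments of a linearly independent family that spans an
isotropic subspace. -/
def ofLinearIndependent {a : Fin l → E} (ha : LinearIndependent F a)
    (hiso : ∀ i j, B (a i) (a j) = 0) : IsotropicFlag B l where
  toFun k := span F (a '' {i | i < k})
  finrank_eq' k hk := by
    have : {i : Fin l | (i : ℕ) < k} = Set.range (Fin.castLE hk) := by simp
    rw [this, ← Set.range_comp, finrank_span_eq_card (ha.comp _ (Fin.castLE_injective hk)),
      Fintype.card_fin]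
  le_succ' k := span_mono (Set.image_mono fun i hi ↦ Nat.lt_succ_of_lt hi)
  eq_of_le' k hk := by
    congr 2
    ext i
    simp [i.is_lt.trans_le hk]
  isotropic' := by
    refine span_le.2 ?_
    rintro _ ⟨j, -, rfl⟩
    exact mem_orthogonal_span_image_iff.2 fun i _ ↦ hiso i j

variable [FiniteDimensional F E]

lemma level_ofLinearIndependent {a : Fin l → E} (ha : LinearIndependent F a)
    (hiso : ∀ i j, B (a i) (a j) = 0) {e : E} {t : Fin l}
    (hae : ∀ i, B (a i) e = if i = t then 1 else 0) :
    (ofLinearIndependent ha hiso).level e = t.castSucc := by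
  refine level_eq_of_forall_iff fun k _ ↦ mem_orthogonal_span_image_iff.trans ?_
  simp only [hae, ite_eq_right_iff, one_ne_zero, imp_false, Set.mem_ofPred_eq]
  constructor
  · exact fun h ↦ not_lt.1 fun htk ↦ h t htk rfl
  · rintro h i hik rfl
    exact (hik.trans_le h).ne rfl

section Classification

variable [NeZero (2 : F)] (hB : B.IsSymm) (hnd : B.Nondegenerate)
include hB hnd

lemma mem_orbit_stabilizer_of_level_eq {e : E} (he : B e e ≠ 0) {V V' : IsotropicFlag B l}
    (h : V.level e = V'.level e) :
    V' ∈ MulAction.orbit (MulAction.stabilizer (isometryGroup B) e) V := by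
  obtain ⟨v, hv, hspan, hve⟩ := V.exists_adapted_basis e
  obtain ⟨v', hv', hspan', hve'⟩ := V'.exists_adapted_basis e
  have range_v : span F (Set.range v) = V l := by simp [hspan l le_rfl]
  have range_v' : span F (Set.range v') = V' l := by simp [hspan' l le_rfl]
  have hvV (i) : v i ∈ V l := range_v ▸ subset_span ⟨i, rfl⟩
  have hvV' (i) : v' i ∈ V' l := range_v' ▸ subset_span ⟨i, rfl⟩
  have indep : LinearIndependent F (Fin.cons e v : Fin (l + 1) → E) :=
    linearIndependent_finCons.2 ⟨hv, range_v ▸ V.notMem_of_apply_self_ne_zero he⟩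
  have indep' : LinearIndependent F (Fin.cons e v' : Fin (l + 1) → E) :=
    linearIndependent_finCons.2 ⟨hv', range_v' ▸ V'.notMem_of_apply_self_ne_zero he⟩
  obtain ⟨g, hg⟩ := exists_isometry_forall_smul_eq hB hnd indep indep' <| by
    simp only [Fin.forall_fin_succ, Fin.cons_zero, Fin.cons_succ, hB.eq e, hve, hve', h,
      V.apply_eq_zero (hvV _) (hvV _), V'.apply_eq_zero (hvV' _) (hvV' _), implies_true, and_self]
  have hge : g • e = e := hg 0
  suffices g • V = V' from MulAction.mem_orbit_iff.2 ⟨⟨g, hge⟩, this⟩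
  refine ext_of_le fun k hk ↦ ?_
  rw [smul_apply, hspan k hk, hspan' k hk, isometry_smul_span_image]
  exact congrArg (fun f ↦ span F (f '' _)) (funext fun i ↦ hg i.succ)

lemma level_eq_iff_mem_orbit_stabilizer {e : E} (he : B e e ≠ 0) {V V' : IsotropicFlag B l} :
    V.level e = V'.level e ↔ V' ∈ MulAction.orbit (MulAction.stabilizer (isometryGroup B) e) V := by
  refine ⟨mem_orbit_stabilizer_of_level_eq hB hnd he, ?_⟩
  rintro ⟨⟨g, hg⟩, rfl⟩
  exact (V.level_smul_smul g e).symm.trans (congrArg (g • V).level hg)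

/-- If `e` is orthogonal to an isotropic family `a`, correcting `e` by a vector `d` dual to `a t`
gives `e'` of the same length as `e` for which the flag of `a` has level `t`; an isometry moving
`e'` to `e` transports this flag. -/
lemma exists_level_eq_castSucc {e : E} (he : B e e ≠ 0) {a : Fin l → E}
    (ha : LinearIndependent F a) (hiso : ∀ i j, B (a i) (a j) = 0) (hae : ∀ i, B (a i) e = 0)
    (t : Fin l) : ∃ V : IsotropicFlag B l, V.level e = t.castSucc := by
  have heV : e ∉ span F (Set.range a) := fun h ↦ he <| by
    rw [← Set.image_univ] at h
    exact mem_orthogonal_span_image_iff.2 (fun i _ ↦ hae i) e h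
  obtain ⟨d, hd⟩ := exists_forall_apply_eq_ite hB hnd (linearIndependent_finCons.2 ⟨ha, heV⟩) t.succ
  have hed : B e d = 0 := by simpa [(Fin.succ_ne_zero t).symm] using hd 0
  have had (i) : B (a i) d = if i = t then 1 else 0 := by simpa using hd i.succ
  set e' := e + d - (B d d / 2) • a t
  have hae' (i) : B (a i) e' = if i = t then 1 else 0 := by simp [e', hae, had, hiso]
  have he' : B e' e' = B e e := by
    simp only [e', map_sub, map_add, map_smul, LinearMap.sub_apply, LinearMap.add_apply,
      LinearMap.smul_apply, smul_eq_mul, hB.eq d e, hB.eq _ (a t), hed, hae, had, hiso, ↓reduceIte]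
    field_simp
    ring
  obtain ⟨g, -, hg⟩ := exists_isometry_fixing_smul_eq hB hnd (H := ⊥) (x := e') (y := e)
    (fun h ↦ he (by simp [← he', (mem_bot F).1 h])) (fun h ↦ he (by simp [(mem_bot F).1 h])) he'
    (by simp)
  exact ⟨g • ofLinearIndependent ha hiso, by
    rw [← hg, level_smul_smul, level_ofLinearIndependent ha hiso hae']⟩

lemma level_surjective {e : E} (he : B e e ≠ 0) {W : Submodule F E} (hW : W ≤ B.orthogonal W)
    (heW : e ∈ B.orthogonal W) (hl : finrank F W = l) :
    Function.Surjective fun V : IsotropicFlag B l ↦ V.level e := by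
  obtain ⟨b⟩ : Nonempty (Basis (Fin l) F W) := ⟨finBasisOfFinrankEq F W hl⟩
  have hb : LinearIndependent F (fun i ↦ (b i : E)) :=
    b.linearIndependent.map' W.subtype W.ker_subtype
  have hiso (i j) : B (b i : E) (b j) = 0 := hW (b j).2 _ (b i).2
  have hbe (i) : B (b i : E) e = 0 := heW _ (b i).2
  intro t
  induction t using Fin.lastCases with
  | last =>
    exact ⟨ofLinearIndependent hb hiso, (level_eq_last_iff _).2
      (mem_orthogonal_span_image_iff.2 fun i _ ↦ hbe i)⟩
  | cast t => exact exists_level_eq_castSucc hB hnd he hb hiso hbe t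

end Classification

end IsotropicFlag

section Determinant

variable [FiniteDimensional F E] {W : Submodule F E} {e : E}

lemma orthogonal_sup_span_singleton_eq_iff (hB : B.IsSymm) (hnd : B.Nondegenerate)
    (hdim : finrank F E = 2 * finrank F W + 1) (hW : W ≤ B.orthogonal W) (he : e ∉ W) :
    B.orthogonal (W ⊔ span F {e}) = W ↔ e ∈ B.orthogonal W := by
  constructor
  · intro h w hw
    rw [hB.eq]
    exact (mem_orthogonal_sup_span_singleton_iff.1 (h.ge hw)).2
  · intro heW
    refine (eq_of_le_of_finrank_eq (fun w hw ↦ mem_orthogonal_sup_span_singleton_iff.2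
      ⟨hW hw, (hB.eq w e).symm.trans (heW w hw)⟩) ?_).symm
    rw [LinearMap.BilinForm.finrank_orthogonal hnd, finrank_sup_span_singleton he]
    omega

lemma exists_anisotropic_mem_orthogonal (hB : B.IsSymm) (hnd : B.Nondegenerate)
    (hdim : finrank F E = 2 * finrank F W + 1) (hW : W ≤ B.orthogonal W) (he : e ∉ W)
    (heW : e ∉ B.orthogonal W) : ∃ r ∈ B.orthogonal W, B r e = 0 ∧ B r r ≠ 0 := by
  have hfinrank : finrank F (B.orthogonal (W ⊔ span F {e})) = finrank F W := by
    rw [LinearMap.BilinForm.finrank_orthogonal hnd, finrank_sup_span_singleton he]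
    omega
  have hle : ¬ B.orthogonal (W ⊔ span F {e}) ≤ W := fun h ↦
    heW ((orthogonal_sup_span_singleton_eq_iff hB hnd hdim hW he).1
      (eq_of_le_of_finrank_eq h hfinrank))
  obtain ⟨r, hr, hrW⟩ := SetLike.not_le_iff_exists.1 hle
  obtain ⟨hr, her⟩ := mem_orthogonal_sup_span_singleton_iff.1 hr
  exact ⟨r, hr, (hB.eq e r).symm.trans her,
    apply_self_ne_zero_of_mem_orthogonal hB hnd hW hdim.le hr hrW⟩

/-- The form identifies `E ⧸ W` with `Dual W × F`, on which `g` acts through the inverse transpose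
of its restriction to `W`, so the determinants on `W` and on `E ⧸ W` cancel. -/
lemma det_eq_one_of_smul_eq (hdim : finrank F E = 2 * finrank F W + 1)
    (hWe : B.orthogonal (W ⊔ span F {e}) = W) {g : isometryGroup B} (hgW : g • W = W)
    (hge : g • e = e) : LinearEquiv.det (g : E ≃ₗ[F] E) = 1 := by
  have map_mem : W ≤ W.comap (g : E ≃ₗ[F] E).toLinearMap := map_le_iff_le_comap.1 hgW.le
  have inv_mem : W ≤ W.comap ((g⁻¹ : isometryGroup B) : E ≃ₗ[F] E).toLinearMap :=
    map_le_iff_le_comap.1 (inv_smul_eq_iff.2 hgW.symm).le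
  set p : E →ₗ[F] Dual F W × F := (W.subtype.dualMap ∘ₗ LinearMap.flip B).prod (B e)
  set gW := (g : E ≃ₗ[F] E).toLinearMap.restrict map_mem
  set gW' := ((g⁻¹ : isometryGroup B) : E ≃ₗ[F] E).toLinearMap.restrict inv_mem
  have ker_p : LinearMap.ker p = W := by
    refine Eq.trans (Submodule.ext fun x ↦ ?_) hWe
    rw [mem_orthogonal_sup_span_singleton_iff, LinearMap.BilinForm.mem_orthogonal_iff]
    simp [p, LinearMap.ext_iff]
  have surj_p : Function.Surjective p := by
    rw [← LinearMap.range_eq_top]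
    apply Submodule.eq_top_of_finrank_eq
    have := LinearMap.finrank_range_add_finrank_ker p
    rw [ker_p] at this
    rw [finrank_prod, Subspace.dual_finrank_eq, finrank_self]
    omega
  have equivariant (x) : p (g • x) = gW'.dualMap.prodMap .id (p x) := by
    refine Prod.ext (LinearMap.ext fun w ↦ ?_) ?_
    · change B w (g • x) = B (g⁻¹ • (w : E)) x
      rw [← isometry_apply_smul_smul g (g⁻¹ • (w : E)), smul_inv_smul]
    · change B e (g • x) = B e x
      rw [← isometry_apply_smul_smul g e x, hge]
  have mul_eq_one : gW * gW' = 1 :=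
    LinearMap.ext fun w ↦ Subtype.ext (smul_inv_smul g (w : E))
  refine Units.ext ((LinearEquiv.coe_det _).trans ?_)
  rw [det_eq_det_restrict_mul_det_of_surjective surj_p ker_p map_mem equivariant,
    LinearMap.det_prodMap, LinearMap.det_dualMap, LinearMap.det_id, mul_one, ← map_mul, mul_eq_one,
    map_one, Units.val_one]

end Determinant

/-- The special part of the stabilizer of `e` in `O(B)`; for `K` this is the copy of `SO(2l)`. -/
def specialStabilizer (B : BilinForm F E) (e : E) :
    Subgroup (MulAction.stabilizer (isometryGroup B) e) :=
  ((LinearEquiv.det (R := F) (M := E)).comp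
    ((isometryGroup B).subtype.comp (MulAction.stabilizer (isometryGroup B) e).subtype)).ker

lemma mem_specialStabilizer_iff {e : E} {g : MulAction.stabilizer (isometryGroup B) e} :
    g ∈ specialStabilizer B e ↔ LinearEquiv.det (g : E ≃ₗ[F] E) = 1 :=
  MonoidHom.mem_ker

lemma index_specialStabilizer [FiniteDimensional F E] (hnd : B.Nondegenerate) {e : E}
    {g : MulAction.stabilizer (isometryGroup B) e} (hg : g ∉ specialStabilizer B e) :
    (specialStabilizer B e).index = 2 := by
  refine Subgroup.index_eq_two_iff_exists_notMem_and.2 ⟨g, hg, fun h ↦ ?_⟩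
  have hdet := (det_isometry_eq_one_or_eq_neg_one hnd g.1).resolve_left
    (mt mem_specialStabilizer_iff.2 hg)
  refine (det_isometry_eq_one_or_eq_neg_one hnd h.1).symm.imp (fun hh ↦ ?_)
    mem_specialStabilizer_iff.2
  simp [mem_specialStabilizer_iff, hdet, hh]

namespace IsotropicFlag

variable {l : ℕ} [FiniteDimensional F E] [NeZero (2 : F)]

lemma exists_mem_stabilizer_notMem_specialStabilizer (hB : B.IsSymm) (hnd : B.Nondegenerate)
    (hdim : finrank F E = 2 * l + 1) {e : E} (he : B e e ≠ 0) {V : IsotropicFlag B l}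
    (hV : V.level e ≠ Fin.last l) :
    ∃ g : MulAction.stabilizer (isometryGroup B) e,
      g ∈ MulAction.stabilizer _ V ∧ g ∉ specialStabilizer B e := by
  obtain ⟨r, hr, hre, hrr⟩ := exists_anisotropic_mem_orthogonal hB hnd
    (by rw [V.finrank_eq le_rfl, hdim]) V.isotropic (V.notMem_of_apply_self_ne_zero he)
    (mt V.level_eq_last_iff.2 hV)
  set ρ := orthogonalReflection hB hrr
  have smul_eq {w : E} (hw : w ∈ V l) : ρ • w = w :=
    orthogonalReflection_smul_of_apply_eq_zero hB hrr ((hB.eq w r).symm.trans (hr w hw))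
  refine ⟨⟨ρ, orthogonalReflection_smul_of_apply_eq_zero hB hrr hre⟩,
    ext_of_le fun i hi ↦ ?_, fun h ↦ ?_⟩
  · ext w
    refine ⟨?_, fun hw ↦ ⟨w, hw, smul_eq (V.monotone hi hw)⟩⟩
    rintro ⟨w, hw, rfl⟩
    change ρ • w ∈ V i
    rwa [smul_eq (V.monotone hi hw)]
  · have neg_one_eq_one := congrArg Units.val
      ((det_orthogonalReflection hB hrr).symm.trans (mem_specialStabilizer_iff.1 h))
    rw [Units.val_neg, Units.val_one, neg_eq_iff_add_eq_zero, one_add_one_eq_two] at neg_one_eq_one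
    exact two_ne_zero neg_one_eq_one

lemma stabilizer_le_specialStabilizer_iff (hB : B.IsSymm) (hnd : B.Nondegenerate)
    (hdim : finrank F E = 2 * l + 1) {e : E} (he : B e e ≠ 0) (V : IsotropicFlag B l) :
    MulAction.stabilizer (MulAction.stabilizer (isometryGroup B) e) V ≤ specialStabilizer B e ↔
      V.level e = Fin.last l := by
  constructor
  · contrapose!
    intro hV h
    obtain ⟨g, hgV, hg⟩ := exists_mem_stabilizer_notMem_specialStabilizer hB hnd hdim he hV
    exact hg (h hgV)
  · intro hV g hgV
    have hfinrank : finrank F E = 2 * finrank F (V l) + 1 := by rw [V.finrank_eq le_rfl, hdim]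
    refine mem_specialStabilizer_iff.2 (det_eq_one_of_smul_eq (W := V l) hfinrank ?_
      (congrArg (fun V : IsotropicFlag B l ↦ V l) hgV) g.2)
    exact (orthogonal_sup_span_singleton_eq_iff hB hnd hfinrank V.isotropic
      (V.notMem_of_apply_self_ne_zero he)).2 (V.level_eq_last_iff.1 hV)

end IsotropicFlag

end Flag

section OrbitCount

variable {G X ι : Type*} [Group G] [MulAction G X] {N : Subgroup G}

lemma smul_mem_orbit_iff_of_index_eq_two (hN : N.index = 2) {g : G} {x : X} :
    g • x ∈ MulAction.orbit N x ↔ (MulAction.stabilizer G x ≤ N → g ∈ N) := by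
  constructor
  · rintro ⟨n, hn⟩ hle
    have hmem : (n : G)⁻¹ * g ∈ N := hle <| by
      rw [MulAction.mem_stabilizer_iff, mul_smul, ← hn]
      exact inv_smul_smul (n : G) x
    exact (N.mul_mem_cancel_left (inv_mem n.2)).1 hmem
  · intro h
    by_cases hg : g ∈ N
    · exact ⟨⟨g, hg⟩, rfl⟩
    obtain ⟨s, hs, hsN⟩ := SetLike.not_le_iff_exists.1 (mt h hg)
    exact ⟨⟨g * s, (Subgroup.mul_mem_iff_of_index_two hN).2 (iff_of_false hg hsN)⟩,
      (mul_smul g s x).trans (congrArg (g • ·) hs)⟩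

/-- If the `G`-orbits are the fibres of `τ`, each of them is a single `N`-orbit except the fibre of
`i₀`, which splits into two. -/
theorem card_orbitRel_quotient_of_index_eq_two [Finite ι] (hN : N.index = 2) {τ : X → ι} {i₀ : ι}
    (hτ : Function.Surjective τ) (horbit : ∀ x y, τ x = τ y ↔ y ∈ MulAction.orbit G x)
    (hstab : ∀ x, MulAction.stabilizer G x ≤ N ↔ τ x = i₀) :
    Nat.card (MulAction.orbitRel.Quotient N X) = Nat.card ι + 1 := by
  obtain ⟨h, hh, -⟩ := Subgroup.index_eq_two_iff_exists_notMem_and.1 hN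
  choose x hx using hτ
  have hτh : τ (h • x i₀) = i₀ := ((horbit _ _).2 ⟨h, rfl⟩).symm.trans (hx i₀)
  have hτN {y z : X} (hyz : y ∈ MulAction.orbit N z) : τ y = τ z :=
    ((horbit z y).2 (MulAction.orbit_subgroup_subset N z hyz)).symm
  have notMem : h • x i₀ ∉ MulAction.orbit N (x i₀) := fun hmem ↦
    hh ((smul_mem_orbit_iff_of_index_eq_two hN).1 hmem ((hstab _).2 (hx i₀)))
  let rep : Option ι → X := fun o ↦ o.elim (h • x i₀) x
  have rep_injective {o o' : Option ι} (hoo' : rep o ∈ MulAction.orbit N (rep o')) : o = o' := by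
    cases o <;> cases o'
    case none.none => rfl
    case some.some i j => simpa [rep, hx] using hτN hoo'
    case none.some j =>
      obtain rfl : i₀ = j := by simpa [rep, hx, hτh] using hτN hoo'
      exact absurd hoo' notMem
    case some.none i =>
      obtain rfl : i = i₀ := by simpa [rep, hx, hτh] using hτN hoo'
      exact absurd (MulAction.mem_orbit_symm.1 hoo') notMem
  have rep_surjective (y : X) : ∃ o, y ∈ MulAction.orbit N (rep o) := by
    obtain ⟨i, g, rfl⟩ : ∃ i g, g • x i = y := ⟨τ y, (horbit _ _).1 (hx (τ y))⟩
    by_cases hg : g • x i ∈ MulAction.orbit N (x i)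
    · exact ⟨some i, hg⟩
    obtain ⟨hstabN, hgN⟩ := Classical.not_imp.1 (mt (smul_mem_orbit_iff_of_index_eq_two hN).2 hg)
    obtain rfl : i = i₀ := (hx i).symm.trans ((hstab _).1 hstabN)
    have hmem : g * h⁻¹ ∈ N :=
      (Subgroup.mul_mem_iff_of_index_two hN).2 (iff_of_false hgN (mt inv_mem_iff.1 hh))
    refine ⟨none, ⟨g * h⁻¹, hmem⟩, ?_⟩
    change (g * h⁻¹) • h • x i = g • x i
    rw [smul_smul, inv_mul_cancel_right]
  rw [← Finite.card_option]
  refine (Nat.card_eq_of_bijective (fun o ↦ Quotient.mk'' (rep o)) ⟨fun o o' hoo' ↦ ?_, ?_⟩).symm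
  · exact rep_injective (Quotient.eq''.1 hoo')
  · exact Quotient.ind fun y ↦ (rep_surjective y).imp fun o ho ↦ (Quotient.sound ho).symm

end OrbitCount

theorem stmt_2_general {F E : Type*} [Field F] [NeZero (2 : F)] [AddCommGroup E] [Module F E]
    [FiniteDimensional F E] {B : BilinForm F E} (hB : B.IsSymm) (hnd : B.Nondegenerate) {l : ℕ}
    (hl : l ≠ 0) (hdim : finrank F E = 2 * l + 1) {e : E} (he : B e e ≠ 0) {W : Submodule F E}
    (hW : W ≤ B.orthogonal W) (heW : e ∈ B.orthogonal W) (hWl : finrank F W = l) :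
    Finite (MulAction.orbitRel.Quotient (specialStabilizer B e) (IsotropicFlag B l)) ∧
      Nat.card (MulAction.orbitRel.Quotient (specialStabilizer B e) (IsotropicFlag B l)) =
        l + 2 := by
  have hlevel := IsotropicFlag.level_surjective hB hnd he hW heW hWl
  have : NeZero l := ⟨hl⟩
  obtain ⟨V, hV⟩ := hlevel 0
  obtain ⟨g, -, hg⟩ := IsotropicFlag.exists_mem_stabilizer_notMem_specialStabilizer hB hnd hdim he
    (hV.trans_ne Fin.last_pos'.ne)
  have hcard := card_orbitRel_quotient_of_index_eq_two (index_specialStabilizer hnd hg) hlevel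
    (fun _ _ ↦ IsotropicFlag.level_eq_iff_mem_orbit_stabilizer hB hnd he)
    (IsotropicFlag.stabilizer_le_specialStabilizer_iff hB hnd hdim he)
  rw [Nat.card_fin] at hcard
  exact ⟨Nat.finite_of_card_ne_zero (hcard ▸ Nat.succ_ne_zero _), hcard⟩

section ComplexForm

/-- The form `β` as a bilinear form on `ℂ^n`. -/
def betaForm (n : ℕ) : BilinForm ℂ (Fin n → ℂ) :=
  LinearMap.mk₂ ℂ (betaF n)
    (fun x x' y ↦ by simp only [betaF, Pi.add_apply, add_mul, Finset.sum_add_distrib])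
    (fun c x y ↦ by simp only [betaF, Pi.smul_apply, smul_eq_mul, mul_assoc, Finset.mul_sum])
    (fun x y y' ↦ by simp only [betaF, Pi.add_apply, mul_add, Finset.sum_add_distrib])
    (fun c x y ↦ by
      simp only [betaF, Pi.smul_apply, smul_eq_mul, mul_left_comm _ c, Finset.mul_sum])

variable {n l : ℕ}

lemma betaForm_apply (x y : Fin n → ℂ) : betaForm n x y = betaF n x y :=
  rfl

lemma betaForm_isSymm : (betaForm n).IsSymm :=
  ⟨fun x y ↦ Fintype.sum_equiv Fin.revPerm _ _ fun k ↦ by simp [mul_comm]⟩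

lemma betaForm_single_left (k : Fin n) (y : Fin n → ℂ) :
    betaForm n (Pi.single k 1) y = y k.rev := by
  simp [betaForm_apply, betaF, Pi.single_apply]

lemma betaForm_nondegenerate : (betaForm n).Nondegenerate :=
  betaForm_isSymm.isRefl.nondegenerate_iff_separatingRight.2 fun y hy ↦ funext fun k ↦ by
    simpa [betaForm_single_left] using hy (Pi.single k.rev 1)

lemma stdVec_eq_single {m : ℕ} (hm : m < n) : stdVec n (m + 1) = Pi.single ⟨m, hm⟩ 1 := by
  simp [stdVec, Nat.succ_le_of_lt hm]

lemma finrank_stdSub {m : ℕ} (hm : m ≤ n) : finrank ℂ (stdSub n m) = m := by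
  have himage : stdVec n '' Set.Icc 1 m =
      Set.range (Pi.basisFun ℂ (Fin n) ∘ Fin.castLE hm) := by
    ext x
    constructor
    · rintro ⟨j, ⟨hj, hjm⟩, rfl⟩
      obtain ⟨k, rfl⟩ := Nat.exists_eq_add_of_le' hj
      exact ⟨⟨k, hjm⟩, by simp [stdVec_eq_single (hm.trans_lt' hjm), Fin.castLE]⟩
    · rintro ⟨k, rfl⟩
      exact ⟨k + 1, ⟨by simp, k.is_lt⟩,
        by simp [stdVec_eq_single (k.is_lt.trans_le hm), Fin.castLE]⟩
  rw [stdSub, himage, finrank_span_eq_card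
    ((Pi.basisFun ℂ (Fin n)).linearIndependent.comp _ (Fin.castLE_injective hm)), Fintype.card_fin]

lemma betaForm_stdVec {j m : ℕ} (hj : j < n) (hm : m < n) :
    betaForm n (stdVec n (j + 1)) (stdVec n (m + 1)) = if j + m + 1 = n then 1 else 0 := by
  rw [stdVec_eq_single hj, stdVec_eq_single hm, betaForm_single_left, Pi.single_apply]
  congr 1
  simp [Fin.ext_iff]
  omega

/-- The flags of `IsIsoFlag` are the isotropic flags of `betaForm`. -/
def isoFlagEquiv (n l : ℕ) : {V // IsIsoFlag n l V} ≃ IsotropicFlag (betaForm n) l where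
  toFun V := ⟨V, V.2.1, V.2.2.1, V.2.2.2.1, fun u hu w hw ↦ V.2.2.2.2 w hw u hu⟩
  invFun V := ⟨V, V.finrank_eq', V.le_succ', V.eq_of_le', fun _ hu _ hw ↦ V.apply_eq_zero hu hw⟩
  left_inv _ := rfl
  right_inv _ := rfl

lemma inKOddOrbit_iff {V V' : {V // IsIsoFlag (2 * l + 1) l V}} :
    InKOddOrbit l V V' ↔ isoFlagEquiv _ l V' ∈ MulAction.orbit
      (specialStabilizer (betaForm (2 * l + 1)) (stdVec (2 * l + 1) (l + 1)))
      (isoFlagEquiv _ l V) := by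
  constructor
  · rintro ⟨g, ⟨⟨hdet, hg⟩, hge⟩, h⟩
    exact ⟨⟨⟨⟨g, hg⟩, hge⟩, Units.ext ((LinearEquiv.coe_det g).trans hdet)⟩, IsotropicFlag.ext h⟩
  · rintro ⟨⟨⟨⟨g, hg⟩, hge⟩, hdet⟩, h⟩
    exact ⟨g, ⟨⟨(LinearEquiv.coe_det g).symm.trans (congrArg Units.val hdet), hg⟩, hge⟩,
      congrArg IsotropicFlag.toFun h⟩

/-- The `K`-orbits of flags are the orbits of the special stabilizer of `e_0` for `betaForm`. -/
def isoOrbitSpaceOddEquiv (l : ℕ) : IsoOrbitSpaceOdd l ≃ MulAction.orbitRel.Quotient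
    (specialStabilizer (betaForm (2 * l + 1)) (stdVec (2 * l + 1) (l + 1)))
    (IsotropicFlag (betaForm (2 * l + 1)) l) :=
  Quot.congr (isoFlagEquiv _ l) fun _ _ ↦ inKOddOrbit_iff.trans MulAction.mem_orbit_symm

lemma mem_orthogonal_stdSub {m : ℕ} (h : l + m < n) :
    stdVec n (m + 1) ∈ (betaForm n).orthogonal (stdSub n l) := by
  refine mem_orthogonal_span_image_iff.2 ?_
  rintro j ⟨hj, hjl⟩
  obtain ⟨k, rfl⟩ := Nat.exists_eq_add_of_le' hj
  rw [betaForm_stdVec (by omega) (by omega), if_neg (by omega)]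

lemma stdSub_isotropic (h : 2 * l ≤ n) :
    stdSub n l ≤ (betaForm n).orthogonal (stdSub n l) := by
  refine span_le.2 ?_
  rintro _ ⟨j, ⟨hj, hjl⟩, rfl⟩
  obtain ⟨k, rfl⟩ := Nat.exists_eq_add_of_le' hj
  exact mem_orthogonal_stdSub (by omega)

end ComplexForm
/-- The action of `K ≅ SO(2l)` on maximal isotropic flags in `ℂ^{2l+1}` has exactly
`l + 2` orbits. -/
theorem stmt_2 (l : ℕ) (hl : 2 ≤ l) :
    Finite (IsoOrbitSpaceOdd l) ∧ Nat.card (IsoOrbitSpaceOdd l) = l + 2 := by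
  rw [(isoOrbitSpaceOddEquiv l).finite_iff, Nat.card_congr (isoOrbitSpaceOddEquiv l)]
  refine stmt_2_general betaForm_isSymm betaForm_nondegenerate (by omega) (by simp) ?_
    (stdSub_isotropic (by omega)) (mem_orthogonal_stdSub (by omega)) (finrank_stdSub (by omega))
  rw [betaForm_stdVec (by omega) (by omega), if_pos (by omega)]
  exact one_ne_zero
end
end
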